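/- arXiv:1806.07640 — 2 statements merged into one kernel-verified Lean document; each statement's English description precedes it below -/
import Mathlib

section
/- Set β = (n−m)/n and Δ = (mq + (n−m)p)(1 − αβ) − αm(q − αβ(q−p)). Then Δ > 0, and the triple defined by π̄₂ = (1−α)αp/Δ, π̄₁ = (1−α)α(q − αβ(q−p))/Δ, and π̄₀ = (1−α)/k + π̄₁ satisfies the mean-field PageRank linear system. -/
noncomputable section

/-- the mean-field PageRank linear system (equations (i)–(iii)). -/
def MeanFieldSystem (k m n p q α π₀ π₁ π₂ : ℝ) : Prop :=
  (π₀ - π₀ * (α * k * q / (m * q + (n - m) * p)) - π₁ * (α * (m - k) * q / (m * q + (n - m) * p))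
      - π₂ * (α * (n - m) / n) = (1 - α) / k) ∧
  (-(π₀ * (α * k * q / (m * q + (n - m) * p))) + π₁
      - π₁ * (α * (m - k) * q / (m * q + (n - m) * p)) - π₂ * (α * (n - m) / n) = 0) ∧
  (-(π₀ * (α * k * p / (m * q + (n - m) * p))) - π₁ * (α * (m - k) * p / (m * q + (n - m) * p))
      + π₂ - π₂ * (α * (n - m) / n) = 0)

/-- the explicit formulas solve the mean-field PageRank system, and the
denominator `Δ` is positive. -/
theorem mean_field_explicit_solution
    (k m n p q α : ℝ) (hk : 0 < k) (hkm : k < m) (hmn : m < n)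
    (hp : 0 < p) (hpq : p ≤ q) (hα : α ∈ Set.Ioo (0 : ℝ) 1) :
    let β := (n - m) / n
    let Δ := (m * q + (n - m) * p) * (1 - α * β) - α * m * (q - α * β * (q - p))
    0 < Δ ∧
      MeanFieldSystem k m n p q α
        ((1 - α) / k + (1 - α) * α * (q - α * β * (q - p)) / Δ)
        ((1 - α) * α * (q - α * β * (q - p)) / Δ)
        ((1 - α) * α * p / Δ) := by
  obtain ⟨hα0, hα1⟩ := hα
  intro β Δ
  have hm : 0 < m := by linarith
  have hn : 0 < n := by linarith
  have hq : 0 < q := by linarith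
  have hnm : 0 < n - m := by linarith
  have hβ : β * n = n - m := div_mul_cancel₀ _ hn.ne'
  have hβ1 : β < 1 := by
    have : β * n < 1 * n := by linarith
    exact lt_of_mul_lt_mul_right this hn.le
  have hβ0 : 0 < β := div_pos hnm hn
  have hab : 0 < 1 - α * β := by nlinarith
  have hα' : 0 < 1 - α := by linarith
  have hab' : 0 < 1 + α - α * β := by linarith
  have hΔe : Δ = (1 - α) * (m * q * (1 - α * β) + (n - m) * p * (1 + α - α * β)) := by
    have hm' : m = n - β * n := by linarith
    show (m * q + (n - m) * p) * (1 - α * β) - α * m * (q - α * β * (q - p)) = _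
    rw [hm']
    ring
  have hΔ : 0 < Δ := by
    rw [hΔe]
    positivity
  have hD : 0 < m * q + (n - m) * p := by positivity
  have hΔd : Δ = (m * q + (n - m) * p) * (1 - α * β) - α * m * (q - α * β * (q - p)) := rfl
  have hb : α * (n - m) / n = α * β := mul_div_assoc _ _ _
  refine ⟨hΔ, ?_⟩
  clear_value Δ β
  unfold MeanFieldSystem
  rw [hb]
  generalize hDD : m * q + (n - m) * p = D at *
  have key : k * ((1 - α) / k + (1 - α) * α * (q - α * β * (q - p)) / Δ)
      + (m - k) * ((1 - α) * α * (q - α * β * (q - p)) / Δ)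
      = D * ((1 - α) * (1 - α * β) / Δ) := by
    field_simp
    rw [hΔd]
    ring
  generalize hP : (1 - α) * α * (q - α * β * (q - p)) / Δ = P at *
  generalize hR : (1 - α) / k + P = R at *
  have key2 : ∀ r, R * (α * k * r / D) + P * (α * (m - k) * r / D)
      = α * r * ((1 - α) * (1 - α * β) / Δ) := by
    intro r
    have : R * (α * k * r / D) + P * (α * (m - k) * r / D)
      = α * r * (k * R + (m - k) * P) / D := by ring
    rw [this, key]
    field_simp
  have e2 : P = α * q * ((1 - α) * (1 - α * β) / Δ) + (1 - α) * α * p / Δ * (α * β) := by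
    rw [← hP]
    ring
  have e3 : (1 - α) * α * p / Δ - (1 - α) * α * p / Δ * (α * β)
      = α * p * ((1 - α) * (1 - α * β) / Δ) := by ring
  have kq := key2 q
  have kp := key2 p
  refine ⟨?_, ?_, ?_⟩ <;> linarith
end
end

section
/- Set ρ = q/p and β = (n−m)/n, and assume p < q so that ρ > 1 and β ∈ (0,1). With Δ = (mq + (n−m)p)(1 − αβ) − αm(q − αβ(q−p)), π̄₂ = (1−α)αp/Δ and π̄₁ = (1−α)α(q − αβ(q−p))/Δ, one has: (a) π̄₁ − π̄₂ = (ρ−1)(1−αβ)·π̄₂; (b) the quantity Q(α) = α²β(ρ−1) − α(ρβ + ρ + β²/(1−β)) + ρ + β/(1−β) satisfies m·p·Q(α) = Δ and Q(α) > 0; and (c) π̄₁ − π̄₂ = α(1−α)(ρ−1)(1−αβ) / ( m·Q(α) ). -/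
noncomputable section

/-- formulas for the mean-field PageRank gap `π̄₁ - π̄₂`. -/
theorem mean_field_ppr_gap
    (k m n p q α : ℝ) (hk : 0 < k) (hkm : k < m) (hmn : m < n)
    (hp : 0 < p) (hpq : p < q) (hα : α ∈ Set.Ioo (0 : ℝ) 1) :
    let ρ := q / p
    let β := (n - m) / n
    let Δ := (m * q + (n - m) * p) * (1 - α * β) - α * m * (q - α * β * (q - p))
    let π₂ := (1 - α) * α * p / Δ
    let π₁ := (1 - α) * α * (q - α * β * (q - p)) / Δ
    let Q := fun a : ℝ => a ^ 2 * β * (ρ - 1) - a * (ρ * β + ρ + β ^ 2 / (1 - β))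
      + ρ + β / (1 - β)
    (π₁ - π₂ = (ρ - 1) * (1 - α * β) * π₂) ∧
    (m * p * Q α = Δ ∧ 0 < Q α) ∧
    (π₁ - π₂ = α * (1 - α) * (ρ - 1) * (1 - α * β) / (m * Q α)) := by
  obtain ⟨h0, h1⟩ := hα
  intro ρ β Δ π₂ π₁ Q
  have hm : 0 < m := hk.trans hkm
  have hn : 0 < n := hm.trans hmn
  have hb0 : 0 < β := div_pos (sub_pos.2 hmn) hn
  have hb : 1 - β = m / n := by
    simp only [β]; field_simp; ring
  have hb1 : 0 < 1 - β := by rw [hb]; positivity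
  have hnb : n * β = n - m := by simp only [β]; field_simp
  have hr : p * ρ = q := by simp only [ρ]; field_simp
  have hr1 : 1 < ρ := by simp only [ρ]; rwa [one_lt_div hp]
  have hc : m * (β / (1 - β)) = n - m := by
    rw [hb, ← hnb]; field_simp
  have hc2 : β ^ 2 / (1 - β) = β * (β / (1 - β)) := by ring
  have hc3 : β / (1 - β) = β + β * (β / (1 - β)) := by
    field_simp; ring
  have hQ : m * p * Q α = Δ := by
    simp only [Q, Δ]
    rw [hc2]
    clear_value ρ β
    rw [← hc, ← hr]; ring
  have hpos : 0 < Q α := by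
    have e : Q α = (1 - α) * (ρ + β / (1 - β) - β * (ρ - 1) * α) := by
      simp only [Q]
      rw [hc2]
      clear_value ρ β
      linear_combination α * hc3
    rw [e]
    have hd : 0 < β / (1 - β) := div_pos hb0 hb1
    have hba : β * α < 1 := by nlinarith
    have : β * α * (ρ - 1) < 1 * (ρ - 1) :=
      mul_lt_mul_of_pos_right hba (sub_pos.2 hr1)
    apply mul_pos (sub_pos.2 h1)
    nlinarith
  have hA : π₁ - π₂ = (ρ - 1) * (1 - α * β) * π₂ := by
    simp only [π₁, π₂]
    clear_value Δ ρ β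
    rw [← hr]; ring
  refine ⟨hA, ⟨hQ, hpos⟩, ?_⟩
  rw [hA]
  simp only [π₂]
  rw [← hQ]
  clear_value Q ρ β
  field_simp
end
end
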